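/- For every s ≥ 0 and every 0 < H_0 ≤ H̄ < ∞ and T > 0, the level set Φ(s) = {φ ∈ C([0, T], [H_0, H̄]) : S_{0T}(φ) ≤ s} is compact in C([0, T], [H_0, H̄]) equipped with the uniform (sup-norm) topology. -/

import Mathlib

open MeasureTheory

open Set Filter Topology in
lemma aux_ac_iff {T : ℝ} (hT : 0 < T) (φ : ℝ → ℝ) :
    (∃ g : ℝ → ℝ, IntervalIntegrable g volume 0 T ∧
          ∀ t ∈ Set.Icc (0 : ℝ) T, φ t = φ 0 + ∫ s in (0 : ℝ)..t, g s) ↔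
      AbsolutelyContinuousOnInterval φ 0 T := by
  constructor
  · rintro ⟨g, hg, h⟩
    have h1 : AbsolutelyContinuousOnInterval (fun x ↦ ∫ v in (0:ℝ)..x, g v) 0 T :=
      hg.absolutelyContinuousOnInterval_intervalIntegral (by simp)
    rw [absolutelyContinuousOnInterval_iff] at h1 ⊢
    intro ε hε
    obtain ⟨δ, hδ, h2⟩ := h1 ε hε
    refine ⟨δ, hδ, fun E hE hE' => ?_⟩
    refine lt_of_eq_of_lt ?_ (h2 E hE hE')
    refine Finset.sum_congr rfl fun i hi => ?_
    have h3 := hE.1 i hi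
    rw [uIcc_of_le hT.le] at h3
    rw [h _ h3.1, h _ h3.2, dist_add_left]
  · intro h
    refine ⟨deriv φ, h.intervalIntegrable_deriv, fun t ht => ?_⟩
    have : AbsolutelyContinuousOnInterval φ 0 t := by
      apply h.mono
      rw [uIcc_of_le hT.le, uIcc_of_le ht.1]
      exact Icc_subset_Icc_right ht.2
    rw [this.integral_deriv_eq_sub]; ring

lemma aux_ofReal_integral {α : Type*} [MeasurableSpace α] {μ : Measure α} {F : α → ℝ}
    (hF : Integrable F μ) :
    ENNReal.ofReal (∫ x, F x ∂μ) ≤ ∫⁻ x, ENNReal.ofReal (F x) ∂μ := by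
  have h1 : Integrable (fun x => max (F x) 0) μ := hF.pos_part
  calc ENNReal.ofReal (∫ x, F x ∂μ) ≤ ENNReal.ofReal (∫ x, max (F x) 0 ∂μ) :=
        ENNReal.ofReal_le_ofReal (integral_mono hF h1 fun x => le_max_left _ _)
    _ = ∫⁻ x, ENNReal.ofReal (max (F x) 0) ∂μ :=
        ofReal_integral_eq_lintegral_ofReal h1 (Filter.Eventually.of_forall fun x => le_max_right _ _)
    _ = _ := by
        congr 1; ext x
        rcases le_total (F x) 0 with h | h
        · simp [h, ENNReal.ofReal_of_nonpos h]
        · simp [h]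

/-- averaged Lagrangian -/
noncomputable def auxG (H : ℝ → ℝ → ℝ) (f : ℝ → ℝ) (δ t : ℝ) : ENNReal :=
  ⨆ β : ℝ, ENNReal.ofReal (β * (δ⁻¹ * (f (t + δ) - f t)) - ∫ v in (0:ℝ)..1, H (f (t + δ * v)) β)

lemma aux_L_meas (H : ℝ → ℝ → ℝ) (hHc : ∀ β, Continuous fun h => H h β) (f : ℝ → ℝ)
    (hf : Continuous f) :
    Measurable (fun u => ⨆ β : ℝ, ENNReal.ofReal (deriv f u * β - H (f u) β)) := by
  have h1 : LowerSemicontinuous (fun p : ℝ × ℝ => ⨆ β : ℝ, ENNReal.ofReal (p.2 * β - H p.1 β)) := by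
    apply lowerSemicontinuous_iSup
    intro β
    apply Continuous.lowerSemicontinuous
    have := hHc β
    exact ENNReal.continuous_ofReal.comp (by fun_prop)
  exact h1.measurable.comp (hf.measurable.prodMk (measurable_deriv f))

lemma aux_G_meas (H : ℝ → ℝ → ℝ) (hHc : ∀ β, Continuous fun h => H h β) (f : ℝ → ℝ)
    (hf : Continuous f) (δ : ℝ) : Measurable (auxG H f δ) := by
  apply LowerSemicontinuous.measurable
  unfold auxG
  apply lowerSemicontinuous_iSup
  intro β
  apply Continuous.lowerSemicontinuous
  have := hHc β
  have h2 : Continuous fun t => ∫ v in (0:ℝ)..1, H (f (t + δ * v)) β := by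
    apply intervalIntegral.continuous_parametric_intervalIntegral_of_continuous'
    exact this.comp (by fun_prop : Continuous fun p : ℝ × ℝ => f (p.1 + δ * p.2))
  exact ENNReal.continuous_ofReal.comp (by fun_prop)

open Set Filter Topology in
lemma aux_pointwise (H : ℝ → ℝ → ℝ) (hHc : ∀ β, Continuous fun h => H h β) (f : ℝ → ℝ)
    (hf : Continuous f) {T : ℝ} (hT : 0 < T) (hac : AbsolutelyContinuousOnInterval f 0 T)
    {δ : ℝ} (hδ : 0 < δ) {t : ℝ} (ht : t ∈ Icc 0 (T - δ)) :
    auxG H f δ t ≤ ∫⁻ v in Ioc (0:ℝ) 1, (Icc 0 T).indicator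
      (fun u => ⨆ β : ℝ, ENNReal.ofReal (deriv f u * β - H (f u) β)) (t + δ * v) := by
  apply iSup_le
  intro β
  have hsub : uIcc t (t + δ) ⊆ uIcc 0 T := by
    rw [uIcc_of_le hT.le, uIcc_of_le (by linarith)]
    exact Icc_subset_Icc ht.1 (by linarith [ht.2])
  have hac' := hac.mono hsub
  have hi : IntervalIntegrable (fun v => deriv f (t + δ * v)) volume 0 1 := by
    have h1 := hac'.intervalIntegrable_deriv
    have h2 := (h1.comp_add_left t).comp_mul_left (c := δ)
    simpa [hδ.ne'] using h2
  have hint : ∫ v in (0:ℝ)..1, deriv f (t + δ * v) = δ⁻¹ * (f (t + δ) - f t) := by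
    rw [intervalIntegral.integral_comp_add_mul _ hδ.ne']
    simp [hac'.integral_deriv_eq_sub]
  have hHi : IntervalIntegrable (fun v => H (f (t + δ * v)) β) volume 0 1 := by
    apply Continuous.intervalIntegrable
    exact (hHc β).comp (by fun_prop : Continuous fun v : ℝ => f (t + δ * v))
  have hi2 : IntervalIntegrable (fun v => deriv f (t + δ * v) * β - H (f (t + δ * v)) β) volume 0 1 :=
    (hi.mul_const β).sub hHi
  have e : β * (δ⁻¹ * (f (t + δ) - f t)) - ∫ v in (0:ℝ)..1, H (f (t + δ * v)) β
      = ∫ v in Ioc (0:ℝ) 1, (deriv f (t + δ * v) * β - H (f (t + δ * v)) β) := by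
    rw [← intervalIntegral.integral_of_le zero_le_one, intervalIntegral.integral_sub (hi.mul_const β) hHi,
      intervalIntegral.integral_mul_const, hint, mul_comm]
  rw [e]
  refine (aux_ofReal_integral ((intervalIntegrable_iff_integrableOn_Ioc_of_le zero_le_one).1 hi2)).trans ?_
  refine setLIntegral_mono' measurableSet_Ioc fun v hv => ?_
  have hm : t + δ * v ∈ Icc 0 T := by
    constructor
    · have := ht.1; have := hv.1; positivity
    · have := ht.2; nlinarith [hv.2]
  rw [indicator_of_mem hm]
  exact le_iSup (fun β : ℝ => ENNReal.ofReal (deriv f (t + δ * v) * β - H (f (t + δ * v)) β)) β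

open Set Filter Topology in
lemma aux_key (H : ℝ → ℝ → ℝ) (hHc : ∀ β, Continuous fun h => H h β) (f : ℝ → ℝ)
    (hf : Continuous f) {T : ℝ} (hT : 0 < T) (hac : AbsolutelyContinuousOnInterval f 0 T)
    {δ : ℝ} (hδ : 0 < δ) :
    ∫⁻ t in Icc 0 (T - δ), auxG H f δ t ≤ 
      ∫⁻ t in Icc 0 T, ⨆ β : ℝ, ENNReal.ofReal (deriv f t * β - H (f t) β) := by
  set F := (Icc 0 T).indicator
      (fun u => ⨆ β : ℝ, ENNReal.ofReal (deriv f u * β - H (f u) β)) with hF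
  have hFm : Measurable F := (aux_L_meas H hHc f hf).indicator measurableSet_Icc
  calc ∫⁻ t in Icc 0 (T - δ), auxG H f δ t 
      ≤ ∫⁻ t in Icc 0 (T - δ), ∫⁻ v in Ioc (0:ℝ) 1, F (t + δ * v) :=
        setLIntegral_mono' measurableSet_Icc fun t ht => aux_pointwise H hHc f hf hT hac hδ ht
    _ ≤ ∫⁻ t, ∫⁻ v in Ioc (0:ℝ) 1, F (t + δ * v) := setLIntegral_le_lintegral _ _
    _ = ∫⁻ v in Ioc (0:ℝ) 1, ∫⁻ t, F (t + δ * v) := by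
        apply lintegral_lintegral_swap
        apply Measurable.aemeasurable
        exact hFm.comp (by fun_prop : Measurable fun p : ℝ × ℝ => p.1 + δ * p.2)
    _ = ∫⁻ v in Ioc (0:ℝ) 1, ∫⁻ t, F t := by
        congr 1; ext v
        exact lintegral_add_right_eq_self F (δ * v)
    _ = ∫⁻ t, F t := by simp
    _ = _ := lintegral_indicator measurableSet_Icc _

open Set Filter Topology in
lemma aux_limδ (H : ℝ → ℝ → ℝ) (hHc : ∀ β, Continuous fun h => H h β) (f : ℝ → ℝ)
    (hf : Continuous f) {T : ℝ} (hT : 0 < T) (hac : AbsolutelyContinuousOnInterval f 0 T)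
    (c : ENNReal) (h : ∀ δ, 0 < δ → ∫⁻ t in Icc 0 (T - δ), auxG H f δ t ≤ c) :
    ∫⁻ t in Icc 0 T, ⨆ β : ℝ, ENNReal.ofReal (deriv f t * β - H (f t) β) ≤ c := by
  let d : ℕ → ℝ := fun n => 1 / ((n:ℝ) + 1)
  have hd : ∀ n, 0 < d n := fun n => by positivity
  have hdt : Tendsto d atTop (𝓝 0) := tendsto_one_div_add_atTop_nhds_zero_nat
  have hdt' : Tendsto d atTop (𝓝[≠] 0) :=
    tendsto_nhdsWithin_iff.2 ⟨hdt, Eventually.of_forall fun n => (hd n).ne'⟩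
  have step : ∫⁻ t in Icc 0 T, ⨆ β : ℝ, ENNReal.ofReal (deriv f t * β - H (f t) β)
      ≤ ∫⁻ t, liminf (fun n => (Icc 0 (T - d n)).indicator (auxG H f (d n)) t) atTop := by
    rw [← lintegral_indicator measurableSet_Icc]
    apply lintegral_mono_ae
    have hne : ∀ᵐ t : ℝ, t ≠ T := by simp [ae_iff]
    filter_upwards [hac.ae_differentiableAt, hne] with t ht htT
    by_cases hm : t ∈ Icc 0 T
    swap
    · simp [indicator_of_notMem hm]
    rw [indicator_of_mem hm]
    have hda := (ht (by rwa [uIcc_of_le hT.le])).hasDerivAt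
    have hlt : t < T := lt_of_le_of_ne hm.2 htT
    apply iSup_le
    intro β
    have ht1 : Tendsto (fun n => (d n)⁻¹ * (f (t + d n) - f t)) atTop (𝓝 (deriv f t)) :=
      hda.tendsto_slope_zero.comp hdt'
    have hc : Continuous fun δ => ∫ v in (0:ℝ)..1, H (f (t + δ * v)) β := by
      apply intervalIntegral.continuous_parametric_intervalIntegral_of_continuous'
      exact (hHc β).comp (by fun_prop : Continuous fun p : ℝ × ℝ => f (t + p.1 * p.2))
    have ht2 : Tendsto (fun n => ∫ v in (0:ℝ)..1, H (f (t + d n * v)) β) atTop (𝓝 (H (f t) β)) := by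
      have := (hc.tendsto 0).comp hdt
      simpa [Function.comp_def] using this
    have ht3 := ENNReal.tendsto_ofReal ((ht1.const_mul β).sub ht2)
    rw [mul_comm, ← ht3.liminf_eq]
    refine liminf_le_liminf ?_
    have : ∀ᶠ n in atTop, d n < T - t := hdt.eventually_lt_const (by linarith)
    filter_upwards [this] with n hn
    rw [indicator_of_mem (show t ∈ Icc 0 (T - d n) from ⟨hm.1, by linarith⟩)]
    exact le_iSup (fun β : ℝ => ENNReal.ofReal (β * ((d n)⁻¹ * (f (t + d n) - f t)) -
      ∫ v in (0:ℝ)..1, H (f (t + d n * v)) β)) β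
  refine step.trans ?_
  refine (lintegral_liminf_le fun n => (aux_G_meas H hHc f hf _).indicator measurableSet_Icc).trans ?_
  refine liminf_le_of_frequently_le' (Frequently.of_forall fun n => ?_)
  rw [lintegral_indicator measurableSet_Icc]
  exact h _ (hd n)

open Set Filter Topology in
lemma aux_limn (H : ℝ → ℝ → ℝ) (hHc : ∀ β, Continuous fun h => H h β) {T : ℝ} (hT : 0 < T)
    (φ : ℕ → C(Icc (0:ℝ) T, ℝ)) (ψ : C(Icc (0:ℝ) T, ℝ)) (hφ : Tendsto φ atTop (𝓝 ψ))
    (c : ENNReal) (δ : ℝ)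
    (h : ∀ n, ∫⁻ t in Icc 0 (T - δ), auxG H (IccExtend hT.le (φ n)) δ t ≤ c) :
    ∫⁻ t in Icc 0 (T - δ), auxG H (IccExtend hT.le ψ) δ t ≤ c := by
  have hcx : ∀ φ : C(Icc (0:ℝ) T, ℝ), Continuous (IccExtend hT.le φ) := fun φ =>
    φ.continuous.Icc_extend'
  have step : ∀ t, auxG H (IccExtend hT.le ψ) δ t ≤
      liminf (fun n => auxG H (IccExtend hT.le (φ n)) δ t) atTop := by
    intro t
    apply iSup_le
    intro β
    have hev : ∀ u : ℝ, Continuous fun χ : C(Icc (0:ℝ) T, ℝ) => IccExtend hT.le χ u := fun u => by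
      unfold IccExtend
      simp only [Function.comp_apply]
      fun_prop
    have hc : Continuous fun χ : C(Icc (0:ℝ) T, ℝ) =>
        ∫ v in (0:ℝ)..1, H (IccExtend hT.le χ (t + δ * v)) β := by
      apply intervalIntegral.continuous_parametric_intervalIntegral_of_continuous'
      refine (hHc β).comp (g := fun h => H h β)
        (f := fun p : C(Icc (0:ℝ) T, ℝ) × ℝ => IccExtend hT.le p.1 (t + δ * p.2)) ?_
      unfold IccExtend
      simp only [Function.comp_apply]
      have : Continuous fun p : C(Icc (0:ℝ) T, ℝ) × ℝ => projIcc 0 T hT.le (t + δ * p.2) :=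
        continuous_projIcc.comp (by fun_prop)
      fun_prop
    have hc2 : Continuous fun χ : C(Icc (0:ℝ) T, ℝ) => ENNReal.ofReal (β * (δ⁻¹ *
        (IccExtend hT.le χ (t + δ) - IccExtend hT.le χ t)) -
        ∫ v in (0:ℝ)..1, H (IccExtend hT.le χ (t + δ * v)) β) := by
      have h1 := hev t
      have h2 := hev (t + δ)
      exact ENNReal.continuous_ofReal.comp (by fun_prop)
    have ht3 := (hc2.tendsto ψ).comp hφ
    rw [← ht3.liminf_eq]
    refine liminf_le_liminf ?_
    refine Eventually.of_forall fun n => ?_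
    exact le_iSup (fun β : ℝ => ENNReal.ofReal (β * (δ⁻¹ *
        (IccExtend hT.le (φ n) (t + δ) - IccExtend hT.le (φ n) t)) -
        ∫ v in (0:ℝ)..1, H (IccExtend hT.le (φ n) (t + δ * v)) β)) β
  refine (lintegral_mono step).trans ?_
  refine (lintegral_liminf_le fun n => aux_G_meas H hHc _ (hcx _) _).trans ?_
  exact liminf_le_of_frequently_le' (Frequently.of_forall h)

open Set Filter Topology in
lemma aux_abs_le (H : ℝ → ℝ → ℝ) (C h a : ℝ) (hC : ∀ β, H h β ≤ C * |β|)
    (hfin : (⨆ β : ℝ, ENNReal.ofReal (a * β - H h β)) < ⊤) : |a| ≤ C := by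
  by_contra hlt
  push Not at hlt
  set K := (⨆ β : ℝ, ENNReal.ofReal (a * β - H h β)).toReal with hK
  have hb : ∀ β, a * β - H h β ≤ K := fun β =>
    (ENNReal.ofReal_le_iff_le_toReal hfin.ne).1
      (le_iSup (fun β : ℝ => ENNReal.ofReal (a * β - H h β)) β)
  have hK0 : 0 ≤ K := ENNReal.toReal_nonneg
  have hr : ∀ r, 0 ≤ r → r * (|a| - C) ≤ K := by
    intro r hr
    rcases le_total 0 a with h0 | h0
    · have h1 := hb r; have h2 := hC r
      rw [abs_of_nonneg hr] at h2; rw [abs_of_nonneg h0]; linarith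
    · have h1 := hb (-r); have h2 := hC (-r)
      rw [abs_neg, abs_of_nonneg hr] at h2; rw [abs_of_nonpos h0]; linarith
  have hp : 0 < |a| - C := by linarith
  have := hr ((K + 1) / (|a| - C)) (by positivity)
  rw [div_mul_cancel₀ _ hp.ne'] at this
  linarith

open Set Filter Topology in
lemma aux_lip (H : ℝ → ℝ → ℝ) (hHc : ∀ β, Continuous fun h => H h β) (f : ℝ → ℝ)
    (hf : Continuous f) {T : ℝ} (hT : 0 < T) (hac : AbsolutelyContinuousOnInterval f 0 T)
    (C : ℝ) (hC : ∀ t β, H (f t) β ≤ C * |β|)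
    (hfin : ∫⁻ t in Icc 0 T, ⨆ β : ℝ, ENNReal.ofReal (deriv f t * β - H (f t) β) < ⊤) :
    ∀ x ∈ Icc 0 T, ∀ y ∈ Icc 0 T, |f y - f x| ≤ C * |y - x| := by
  have h1 := ae_lt_top (aux_L_meas H hHc f hf) hfin.ne
  rw [ae_restrict_iff' measurableSet_Icc] at h1
  intro x hx y hy
  have hsub : uIcc x y ⊆ Icc 0 T := uIcc_subset_Icc hx hy
  have := (hac.mono (c := x) (d := y) (by rwa [uIcc_of_le hT.le])).integral_deriv_eq_sub
  rw [← this, ← Real.norm_eq_abs]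
  apply intervalIntegral.norm_integral_le_of_norm_le_const_ae
  filter_upwards [h1] with t ht htm
  exact aux_abs_le H C (f t) _ (hC t) (ht (hsub (uIoc_subset_uIcc htm)))

open Set Filter Topology in
lemma aux_compact {T : ℝ} (A : Set C(Icc (0:ℝ) T, ℝ)) (hA : IsClosed A) (a b C : ℝ)
    (hab : ∀ φ ∈ A, ∀ t, φ t ∈ Icc a b)
    (hlip : ∀ φ ∈ A, ∀ x y, |φ y - φ x| ≤ C * |(y:ℝ) - x|) : IsCompact A := by
  let e := ContinuousMap.isometryEquivBoundedOfCompact (Icc (0:ℝ) T) ℝ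
  have h1 : IsCompact (e '' A) := by
    apply BoundedContinuousFunction.arzela_ascoli₂ (Icc a b) isCompact_Icc
    · exact e.toHomeomorph.isClosed_image.2 hA
    · rintro _ x ⟨φ, hφ, rfl⟩
      exact hab φ hφ x
    · apply Metric.equicontinuous_of_continuity_modulus (fun r => C * r)
      · exact (by fun_prop : Continuous fun r : ℝ => C * r).tendsto' _ _ (by simp)
      · rintro x y ⟨_, φ, hφ, rfl⟩
        have := hlip φ hφ y x
        rw [Subtype.dist_eq, Real.dist_eq, Real.dist_eq]
        exact this
  exact e.toHomeomorph.isCompact_image.1 h1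

lemma aux_log_bound {Ω : Type*} [MeasurableSpace Ω] (P : Measure Ω) [IsProbabilityMeasure P]
    (ξ η ζ : Ω → ℝ) (hξmeas : Measurable ξ) (hηmeas : Measurable η) (M : ℝ) (hM : 0 < M)
    (hξbdd : P {ω | |ξ ω| ≤ M} = 1) (hηbdd : P {ω | |η ω| ≤ M} = 1)
    (hζ : ∀ ω, ζ ω = -(ξ ω + η ω)) (β : ℝ) :
    Real.log (∫ ω, Real.exp (β * ζ ω) ∂P) ≤ 2 * M * |β| := by
  have h1 : ∀ᵐ ω ∂P, |ξ ω| ≤ M :=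
    (prob_compl_eq_zero_iff (measurableSet_le (by fun_prop) (by fun_prop))).2 hξbdd
  have h2 : ∀ᵐ ω ∂P, |η ω| ≤ M :=
    (prob_compl_eq_zero_iff (measurableSet_le (by fun_prop) (by fun_prop))).2 hηbdd
  have h3 : ∀ᵐ ω ∂P, Real.exp (β * ζ ω) ≤ Real.exp (2 * M * |β|) := by
    filter_upwards [h1, h2] with ω a b
    apply Real.exp_le_exp.2
    have : |ζ ω| ≤ 2 * M := by
      rw [hζ, abs_neg]; exact (abs_add_le _ _).trans (by linarith)
    calc β * ζ ω ≤ |β * ζ ω| := le_abs_self _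
      _ = |β| * |ζ ω| := abs_mul _ _
      _ ≤ |β| * (2 * M) := by gcongr
      _ = _ := by ring
  have h4 : ∫ ω, Real.exp (β * ζ ω) ∂P ≤ Real.exp (2 * M * |β|) := by
    calc _ ≤ ∫ ω, Real.exp (2 * M * |β|) ∂P :=
          integral_mono_of_nonneg (Filter.Eventually.of_forall fun ω => (Real.exp_pos _).le)
            (integrable_const _) h3
      _ = _ := by simp
  have h5 : 0 ≤ ∫ ω, Real.exp (β * ζ ω) ∂P := integral_nonneg fun ω => (Real.exp_pos _).le
  rcases h5.eq_or_lt with h | h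
  · rw [← h, Real.log_zero]; positivity
  · exact (Real.log_le_iff_le_exp h).2 h4

/-- compactness of level sets of the action functional: for every
s ≥ 0, 0 < H₀ ≤ H̄ and T > 0, the set Φ(s) = {φ ∈ C([0,T],[H₀,H̄]) : S₀T(φ) ≤ s}
is compact in C([0,T],ℝ) with the uniform topology (which, on the compact interval
[0,T], is the compact-open topology of `C(Set.Icc 0 T, ℝ)`).  The action functional
S₀T is ∫₀ᵀ L(φ_t, φ̇_t) dt for absolutely continuous φ and +∞ otherwise; a continuous
map on [0,T] is identified with its extension `Set.IccExtend` to ℝ. -/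
theorem stmt_15
    {Ω : Type*} [MeasurableSpace Ω] (P : Measure Ω) [IsProbabilityMeasure P]
    (ξ η : Ω → ℝ) (hξmeas : Measurable ξ) (hηmeas : Measurable η)
    (hξdens : ∃ f : ℝ → ℝ, Continuous f ∧
      Measure.map ξ P = volume.withDensity (fun x => ENNReal.ofReal (f x)))
    (hηdens : ∃ f : ℝ → ℝ, Continuous f ∧
      Measure.map η P = volume.withDensity (fun x => ENNReal.ofReal (f x)))
    (M : ℝ) (hM : 0 < M)
    (hξbdd : P {ω | |ξ ω| ≤ M} = 1) (hηbdd : P {ω | |η ω| ≤ M} = 1)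
    (hmean : 0 < ∫ ω, (ξ ω + η ω) ∂P)
    (ζ : Ω → ℝ) (hζ : ∀ ω, ζ ω = -(ξ ω + η ω))
    (D : ℝ) (hD : 0 < D)
    (H : ℝ → ℝ → ℝ)
    (hH : ∀ h β, H h β =
      Real.sqrt (2 * h) / (2 * D) * Real.log (∫ ω, Real.exp (β * ζ ω) ∂P))
    (L : ℝ → ℝ → ENNReal)
    (hL : ∀ h a, L h a = ⨆ β : ℝ, ENNReal.ofReal (a * β - H h β))
    (T H₀ Hbar : ℝ) (hT : 0 < T) (hH₀ : 0 < H₀) (hHle : H₀ ≤ Hbar)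
    (S : (ℝ → ℝ) → ENNReal)
    (hSac : ∀ φ : ℝ → ℝ,
      (∃ g : ℝ → ℝ, IntervalIntegrable g volume 0 T ∧
          ∀ t ∈ Set.Icc (0 : ℝ) T, φ t = φ 0 + ∫ s in (0 : ℝ)..t, g s) →
        S φ = ∫⁻ t in Set.Icc (0 : ℝ) T, L (φ t) (deriv φ t))
    (hSnac : ∀ φ : ℝ → ℝ,
      (¬ ∃ g : ℝ → ℝ, IntervalIntegrable g volume 0 T ∧
          ∀ t ∈ Set.Icc (0 : ℝ) T, φ t = φ 0 + ∫ s in (0 : ℝ)..t, g s) →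
        S φ = ⊤)
    (s : ℝ) (hs : 0 ≤ s) :
    IsCompact {φ : C(Set.Icc (0 : ℝ) T, ℝ) |
      (∀ t, φ t ∈ Set.Icc H₀ Hbar) ∧
      S (Set.IccExtend hT.le ⇑φ) ≤ ENNReal.ofReal s} := by
  have hHc : ∀ β, Continuous fun h => H h β := by
    intro β
    simp only [hH]
    fun_prop
  set C : ℝ := Real.sqrt (2 * Hbar) / (2 * D) * (2 * M) with hCdef
  have hC0 : 0 ≤ C := by positivity
  have hCb : ∀ h ∈ Set.Icc H₀ Hbar, ∀ β, H h β ≤ C * |β| := by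
    intro h hh β
    rw [hH, hCdef]
    have h1 := aux_log_bound P ξ η ζ hξmeas hηmeas M hM hξbdd hηbdd hζ β
    calc _ ≤ Real.sqrt (2 * h) / (2 * D) * (2 * M * |β|) := by gcongr
      _ ≤ Real.sqrt (2 * Hbar) / (2 * D) * (2 * M * |β|) := by
          have := hh.2
          gcongr
      _ = _ := by ring
  have hcx : ∀ φ : C(Set.Icc (0:ℝ) T, ℝ), Continuous (Set.IccExtend hT.le φ) := fun φ =>
    φ.continuous.Icc_extend'
  have hchar : ∀ φ : C(Set.Icc (0:ℝ) T, ℝ),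
      S (Set.IccExtend hT.le φ) ≤ ENNReal.ofReal s →
      AbsolutelyContinuousOnInterval (Set.IccExtend hT.le φ) 0 T ∧
      ∫⁻ t in Set.Icc 0 T, ⨆ β : ℝ, ENNReal.ofReal (deriv (Set.IccExtend hT.le φ) t * β -
        H (Set.IccExtend hT.le φ t) β) ≤ ENNReal.ofReal s := by
    intro φ hφ
    by_cases hac : AbsolutelyContinuousOnInterval (Set.IccExtend hT.le φ) 0 T
    · refine ⟨hac, ?_⟩
      rw [hSac _ ((aux_ac_iff hT _).2 hac)] at hφ
      simpa only [hL] using hφ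
    · rw [hSnac _ (fun h => hac ((aux_ac_iff hT _).1 h))] at hφ
      simp at hφ
  have hmemE : ∀ φ : C(Set.Icc (0:ℝ) T, ℝ), (∀ t, φ t ∈ Set.Icc H₀ Hbar) →
      ∀ t, Set.IccExtend hT.le φ t ∈ Set.Icc H₀ Hbar := fun φ h t => h _
  have hlip : ∀ φ : C(Set.Icc (0:ℝ) T, ℝ), (∀ t, φ t ∈ Set.Icc H₀ Hbar) →
      S (Set.IccExtend hT.le φ) ≤ ENNReal.ofReal s →
      ∀ x y, |φ y - φ x| ≤ C * |(y:ℝ) - x| := by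
    intro φ h1 h2 x y
    obtain ⟨hac, hb⟩ := hchar φ h2
    have := aux_lip H hHc _ (hcx φ) hT hac C (fun t β => hCb _ (hmemE φ h1 t) β)
      (hb.trans_lt ENNReal.ofReal_lt_top) x x.2 y y.2
    simpa using this
  refine aux_compact _ ?_ H₀ Hbar C (fun φ hφ => hφ.1) (fun φ hφ => hlip φ hφ.1 hφ.2)
  apply IsSeqClosed.isClosed
  intro φ ψ hφ hlim
  have hpt : ∀ t, Filter.Tendsto (fun n => φ n t) Filter.atTop (nhds (ψ t)) := fun t =>
    ((by fun_prop : Continuous fun χ : C(Set.Icc (0:ℝ) T, ℝ) => χ t).tendsto ψ).comp hlim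
  have hψmem : ∀ t, ψ t ∈ Set.Icc H₀ Hbar := fun t =>
    isClosed_Icc.mem_of_tendsto (hpt t) (Filter.Eventually.of_forall fun n => (hφ n).1 t)
  have hψlip : ∀ x y, |ψ y - ψ x| ≤ C * |(y:ℝ) - x| := fun x y =>
    le_of_tendsto ((hpt y).sub (hpt x)).abs
      (Filter.Eventually.of_forall fun n => hlip _ (hφ n).1 (hφ n).2 x y)
  have hψac : AbsolutelyContinuousOnInterval (Set.IccExtend hT.le ψ) 0 T := by
    apply LipschitzOnWith.absolutelyContinuousOnInterval (K := C.toNNReal)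
    apply LipschitzOnWith.of_dist_le_mul
    intro x hx y hy
    rw [Set.uIcc_of_le hT.le] at hx hy
    rw [Set.IccExtend_of_mem _ _ hx, Set.IccExtend_of_mem _ _ hy, Real.coe_toNNReal _ hC0,
      Real.dist_eq, Real.dist_eq]
    exact hψlip ⟨y, hy⟩ ⟨x, hx⟩
  refine ⟨hψmem, ?_⟩
  rw [hSac _ ((aux_ac_iff hT _).2 hψac)]
  simp only [hL]
  apply aux_limδ H hHc _ (hcx ψ) hT hψac
  intro δ hδ
  apply aux_limn H hHc hT φ ψ hlim
  intro n
  obtain ⟨hac, hb⟩ := hchar (φ n) (hφ n).2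
  exact (aux_key H hHc _ (hcx (φ n)) hT hac hδ).trans hb
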